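/- Let 1 ≤ s < S < p/2, let u > 1, and set t = max{ √(4u·s·log C(S,s)/(n(p−S))), 8u·s·log C(S,s)/(n(p−S)) }, where C(S,s) denotes the binomial coefficient 'S choose s'. Consider the test Δ that rejects if and only if there exists a subset 𝐒 ⊆ {1,…,S} with |𝐒| = s such that Tr(A_𝐒(Σ_n − I_p)) ≥ t, where A_𝐒 = ∑_{j∈𝐒} A_j. If σ ≥ (1/s)·( t + (2s+1)·max{ √(u·s/(n(p−S))), 2u·s/(n(p−S)) } ), then P_{I_p}[Δ rejects] + sup_{Σ ∈ F_+(s,S,σ)} P_Σ[Δ accepts] ≤ exp(−(u−1)·log C(S,s)) + exp(−u/4), where P_{I_p} (resp. P_Σ) denotes the law of Σ_n when X_1,…,X_n are i.i.d. N_p(0, I_p) (resp. N_p(0, Σ)). -/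

import Mathlib

open MeasureTheory Matrix Real
open scoped ENNReal BigOperators NNReal

noncomputable def gaussianPDF {p : ℕ} (C : Matrix (Fin p) (Fin p) ℝ) (x : Fin p → ℝ) : ℝ≥0∞ :=
  ENNReal.ofReal ((2 * Real.pi) ^ (-(p : ℝ) / 2) * C.det ^ (-(1:ℝ)/2) *
    Real.exp (-(1/2) * (x ⬝ᵥ C⁻¹.mulVec x)))

/-- The centered multivariate Gaussian measure `N_p(0, C)` on `Fin p → ℝ`. -/
noncomputable def gaussianMeasure {p : ℕ} (C : Matrix (Fin p) (Fin p) ℝ) :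
    Measure (Fin p → ℝ) :=
  MeasureTheory.volume.withDensity (gaussianPDF C)

/-- The law of `n` i.i.d. `N_p(0, C)` vectors. -/
noncomputable def iidGaussian (n p : ℕ) (C : Matrix (Fin p) (Fin p) ℝ) :
    Measure (Fin n → Fin p → ℝ) :=
  MeasureTheory.volume.withDensity fun X => ∏ k, gaussianPDF C (X k)

/-- The sample covariance matrix `Σ_n = (1/n) ∑ X_k X_kᵀ`. -/
noncomputable def sampleCov {n p : ℕ} (X : Fin n → Fin p → ℝ) :
    Matrix (Fin p) (Fin p) ℝ :=
  (n : ℝ)⁻¹ • ∑ k, Matrix.of fun i j => X k i * X k j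

/-- Frobenius norm of a matrix. -/
noncomputable def frobNorm {p : ℕ} (M : Matrix (Fin p) (Fin p) ℝ) : ℝ :=
  Real.sqrt (∑ i, ∑ j, (M i j)^2)

/-- Spectral (ℓ²-operator) norm of a matrix. -/
noncomputable def specNorm {p : ℕ} (M : Matrix (Fin p) (Fin p) ℝ) : ℝ :=
  ‖Matrix.toEuclideanCLM (𝕜 := ℝ) M‖

/-- The matrix `A_j` with entries `1/(2(p-j))` on the `j`-th upper and lower diagonals. -/
noncomputable def lagMatrix (p j : ℕ) : Matrix (Fin p) (Fin p) ℝ :=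
  Matrix.of fun k l => if ((k:ℤ) - (l:ℤ)).natAbs = j then 1/(2*((p:ℝ) - j)) else 0

/-- Two-sided class `F(s,S,σ)` of sparse Toeplitz covariance matrices with
diagonal value `σ0`. -/
def memF (p s S : ℕ) (σ σ0 : ℝ) (C : Matrix (Fin p) (Fin p) ℝ) : Prop :=
  C.PosDef ∧ ∃ v : ℕ → ℝ, v 0 = σ0 ∧
    (∀ i j : Fin p, C i j = v ((i:ℤ) - (j:ℤ)).natAbs) ∧
    ∃ T : Finset ℕ, T ⊆ Finset.Icc 1 S ∧ T.card = s ∧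
      (∀ j ∈ T, σ ≤ |v j|) ∧ (∀ j, 1 ≤ j → j ≤ p - 1 → j ∉ T → v j = 0)

/-- One-sided class `F₊(s,S,σ)` of sparse Toeplitz covariance matrices with
diagonal value `σ0`. -/
def memFplus (p s S : ℕ) (σ σ0 : ℝ) (C : Matrix (Fin p) (Fin p) ℝ) : Prop :=
  C.PosDef ∧ ∃ v : ℕ → ℝ, v 0 = σ0 ∧
    (∀ i j : Fin p, C i j = v ((i:ℤ) - (j:ℤ)).natAbs) ∧
    ∃ T : Finset ℕ, T ⊆ Finset.Icc 1 S ∧ T.card = s ∧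
      (∀ j ∈ T, σ ≤ v j) ∧ (∀ j, 1 ≤ j → j ≤ p - 1 → j ∉ T → v j = 0)


/-- A real symmetric matrix is orthogonally diagonalizable. -/
lemma Matrix.IsHermitian.exists_orthogonal_diagonal {p : ℕ} {B : Matrix (Fin p) (Fin p) ℝ}
    (hB : B.IsHermitian) :
    ∃ (V : Matrix (Fin p) (Fin p) ℝ), V * Vᵀ = 1 ∧ Vᵀ * B * V = diagonal hB.eigenvalues := by
  refine ⟨hB.eigenvectorUnitary, ?_, ?_⟩
  · have := Unitary.coe_mul_star_self hB.eigenvectorUnitary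
    simpa [star_eq_conjTranspose, conjTranspose_eq_transpose_of_trivial] using this
  · have := hB.conjStarAlgAut_star_eigenvectorUnitary
    rw [Unitary.conjStarAlgAut_star_apply] at this
    simpa [star_eq_conjTranspose, conjTranspose_eq_transpose_of_trivial, Function.comp_def]
      using this

/-- A positive definite matrix and a symmetric matrix are simultaneously diagonalizable by
congruence. -/
lemma Matrix.PosDef.exists_congruence_diagonal {p : ℕ} {C A : Matrix (Fin p) (Fin p) ℝ}
    (hC : C.PosDef) (hA : Aᵀ = A) :
    ∃ (P : Matrix (Fin p) (Fin p) ℝ) (d : Fin p → ℝ),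
      P * Pᵀ = C ∧ Pᵀ * A * P = diagonal d := by
  obtain ⟨U, hU, hUC⟩ := hC.1.exists_orthogonal_diagonal
  set D : Matrix (Fin p) (Fin p) ℝ := diagonal fun i => √(hC.1.eigenvalues i) with hD
  have hDD : D * Dᵀ = Uᵀ * C * U := by
    rw [hUC, hD, diagonal_transpose, diagonal_mul_diagonal]
    congr 1; funext i
    exact Real.mul_self_sqrt (hC.eigenvalues_pos i).le
  have hB : ((U * D)ᵀ * A * (U * D)).IsHermitian := by
    rw [IsHermitian, conjTranspose_eq_transpose_of_trivial]
    simp only [transpose_mul, transpose_transpose, hA, Matrix.mul_assoc]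
  obtain ⟨V, hV, hVB⟩ := hB.exists_orthogonal_diagonal
  refine ⟨U * D * V, hB.eigenvalues, ?_, ?_⟩
  · calc U * D * V * (U * D * V)ᵀ = U * (D * (V * Vᵀ) * Dᵀ) * Uᵀ := by
          simp only [transpose_mul, Matrix.mul_assoc]
      _ = (U * Uᵀ) * C * (U * Uᵀ) := by
          rw [hV, Matrix.mul_one, hDD]; simp only [Matrix.mul_assoc]
      _ = C := by rw [hU, Matrix.one_mul, Matrix.mul_one]
  · rw [← hVB]; simp only [transpose_mul, Matrix.mul_assoc]

/-- Tonelli's theorem for a product of functions of the separate coordinates. -/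
lemma lintegral_fin_prod_eq_prod {E : Type*} [MeasureSpace E]
    [SigmaFinite (volume : Measure E)] {n : ℕ} (f : Fin n → E → ℝ≥0∞)
    (hf : ∀ i, Measurable (f i)) :
    ∫⁻ x : Fin n → E, ∏ i, f i (x i) = ∏ i, ∫⁻ x, f i x := by
  induction n with
  | zero => simp [volume_pi]
  | succ n ih =>
    have hm : Measurable fun x : Fin n → E => ∏ i, f (Fin.succ i) (x i) :=
      Finset.measurable_prod _ fun i _ => (hf _).comp (measurable_pi_apply i)
    rw [← ((volume_preserving_piFinSuccAbove (fun _ : Fin (n + 1) => E) 0).symm).lintegral_comp_emb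
      (MeasurableEquiv.measurableEmbedding _), Fin.prod_univ_succ,
      ← ih (fun i => f i.succ) (fun i => hf _), ← lintegral_prod_mul (hf 0).aemeasurable
        hm.aemeasurable]
    simp [MeasurableEquiv.piFinSuccAbove_symm_apply, Fin.insertNthEquiv, Fin.prod_univ_succ,
      Measure.volume_eq_prod]

lemma one_le_one_sub_mul_exp {z : ℝ} (hz : |z| ≤ 1 / 2) : 1 ≤ (1 - z) * exp (z + z ^ 2) := by
  obtain ⟨h1, h2⟩ := abs_le.mp hz
  rcases le_total 0 z with h | h
  · have := Real.quadratic_le_exp_of_nonneg (x := z + z ^ 2) (by positivity)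
    have h3 : (1 - z) * (1 + (z + z ^ 2) + (z + z ^ 2) ^ 2 / 2) ≤ (1 - z) * exp (z + z ^ 2) :=
      mul_le_mul_of_nonneg_left this (by linarith)
    have h4 : z ≤ (1 - z) * (1 + z) ^ 2 / 2 := by
      nlinarith [mul_nonneg h (sub_nonneg.2 h2), mul_nonneg (mul_nonneg h h) (sub_nonneg.2 h2)]
    nlinarith [mul_nonneg (sq_nonneg z) (sub_nonneg.2 h4)]
  · have := Real.add_one_le_exp (z + z ^ 2)
    have h3 : (1 - z) * (z + z ^ 2 + 1) ≤ (1 - z) * exp (z + z ^ 2) :=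
      mul_le_mul_of_nonneg_left this (by linarith)
    nlinarith [mul_nonneg (sq_nonneg z) (neg_nonneg.2 h)]

/-- Moment generating function bound for the square of a standard normal variable. -/
lemma lintegral_gaussian_sq_le {y : ℝ} (hy : |y| ≤ 1 / 4) :
    ∫⁻ z : ℝ, ENNReal.ofReal ((2 * π) ^ (-(1 : ℝ) / 2) * exp (-(1 / 2 - y) * z ^ 2))
      ≤ ENNReal.ofReal (exp (y + 2 * y ^ 2)) := by
  obtain ⟨h1, h2⟩ := abs_le.mp hy
  have hb : 0 < 1 / 2 - y := by linarith
  rw [← ofReal_integral_eq_lintegral_ofReal ((integrable_exp_neg_mul_sq hb).const_mul _)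
    (Filter.Eventually.of_forall fun _ => by positivity), integral_const_mul, integral_gaussian]
  apply ENNReal.ofReal_le_ofReal
  have hz := one_le_one_sub_mul_exp (z := 2 * y) (by rw [abs_mul, abs_two]; linarith)
  have e : (2 * π) ^ (-(1 : ℝ) / 2) * √(π / (1 / 2 - y)) = √(1 / (1 - 2 * y)) := by
    rw [neg_div, Real.rpow_neg (by positivity), ← Real.sqrt_eq_rpow, ← Real.sqrt_inv,
      ← Real.sqrt_mul (by positivity)]
    congr 1
    have : 1 - 2 * y ≠ 0 := by linarith
    have : 1 / 2 - y ≠ 0 := hb.ne'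
    field_simp
  have e' : exp (y + 2 * y ^ 2) ^ 2 = exp (2 * y + (2 * y) ^ 2) := by
    rw [← Real.exp_nat_mul]; congr 1; push_cast; ring
  rw [e, Real.sqrt_le_left (exp_pos _).le, div_le_iff₀ (by linarith), e', mul_comm]
  exact hz

/-- Moment generating function bound for a Gaussian quadratic form, in coordinates where both the
covariance and the form are diagonal. -/
lemma lintegral_gaussianPDF_mul_exp_le {p : ℕ} {C A P : Matrix (Fin p) (Fin p) ℝ}
    {d : Fin p → ℝ} (hC : C.PosDef) (hPC : P * Pᵀ = C) (hPA : Pᵀ * A * P = diagonal d)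
    {l : ℝ} (hd : ∀ i, |l * d i| ≤ 1 / 4) :
    ∫⁻ x, gaussianPDF C x * ENNReal.ofReal (exp (l * (x ⬝ᵥ A *ᵥ x)))
      ≤ ENNReal.ofReal (exp (l * ∑ i, d i + 2 * l ^ 2 * ∑ i, d i ^ 2)) := by
  have hdet : C.det = P.det ^ 2 := by rw [← hPC, det_mul, det_transpose, sq]
  have hP : P.det ≠ 0 := by
    intro h
    have := hC.det_pos
    rw [hdet, h] at this
    simp at this
  have hPu : IsUnit P.det := hP.isUnit
  have hPtu : IsUnit Pᵀ.det := by rwa [det_transpose]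
  have hmeas : Measurable fun x => gaussianPDF C x * ENNReal.ofReal (exp (l * (x ⬝ᵥ A *ᵥ x))) := by
    unfold gaussianPDF
    simp only [dotProduct, mulVec]
    fun_prop
  have hmap := Real.map_matrix_volume_pi_eq_smul_volume_pi hP
  have hcv : ∫⁻ z, gaussianPDF C (P *ᵥ z) * ENNReal.ofReal (exp (l * ((P *ᵥ z) ⬝ᵥ A *ᵥ (P *ᵥ z))))
      = ENNReal.ofReal |P.det⁻¹| *
        ∫⁻ x, gaussianPDF C x * ENNReal.ofReal (exp (l * (x ⬝ᵥ A *ᵥ x))) := by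
    have h := lintegral_map (μ := (volume : Measure (Fin p → ℝ))) hmeas
      (g := toLin' P) (LinearMap.continuous_of_finiteDimensional _).measurable
    rw [hmap, lintegral_smul_measure] at h
    simpa using h.symm
  have hq1 : ∀ z, (P *ᵥ z) ⬝ᵥ C⁻¹ *ᵥ (P *ᵥ z) = ∑ i, z i ^ 2 := by
    intro z
    rw [← hPC, Matrix.mul_inv_rev, mulVec_mulVec, Matrix.mul_assoc, nonsing_inv_mul _ hPu,
      Matrix.mul_one, dotProduct_mulVec, vecMul_mulVec, mul_nonsing_inv _ hPtu, vecMul_one]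
    simp [dotProduct, sq]
  have hq2 : ∀ z, (P *ᵥ z) ⬝ᵥ A *ᵥ (P *ᵥ z) = ∑ i, d i * z i ^ 2 := by
    intro z
    have : (P *ᵥ z) ⬝ᵥ A *ᵥ (P *ᵥ z) = z ⬝ᵥ (Pᵀ * A * P) *ᵥ z := by
      rw [← mulVec_mulVec, ← mulVec_mulVec, dotProduct_mulVec z Pᵀ, vecMul_transpose]
    rw [this, hPA]
    simp only [dotProduct, mulVec_diagonal]
    exact Finset.sum_congr rfl fun i _ => by ring
  have hpow : (2 * π) ^ (-(p : ℝ) / 2) = ∏ _i : Fin p, (2 * π) ^ (-(1 : ℝ) / 2) := by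
    rw [Finset.prod_const, Finset.card_univ, Fintype.card_fin, ← Real.rpow_natCast,
      ← Real.rpow_mul (by positivity)]
    congr 1; ring
  have hdet' : C.det ^ (-(1 : ℝ) / 2) = |P.det⁻¹| := by
    rw [hdet, neg_div, Real.rpow_neg (by positivity), ← Real.sqrt_eq_rpow, Real.sqrt_sq_eq_abs,
      abs_inv]
  have hint : ∀ z, gaussianPDF C (P *ᵥ z) *
      ENNReal.ofReal (exp (l * ((P *ᵥ z) ⬝ᵥ A *ᵥ (P *ᵥ z)))) = ENNReal.ofReal |P.det⁻¹| *
      ∏ i, ENNReal.ofReal ((2 * π) ^ (-(1 : ℝ) / 2) * exp (-(1 / 2 - l * d i) * z i ^ 2)) := by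
    intro z
    rw [gaussianPDF, hq1, hq2, hdet', ← ENNReal.ofReal_prod_of_nonneg (fun i _ => by positivity),
      ← ENNReal.ofReal_mul (by positivity), ← ENNReal.ofReal_mul (by positivity),
      Finset.prod_mul_distrib, ← hpow, ← Real.exp_sum]
    congr 1
    have : exp (∑ i, -(1 / 2 - l * d i) * z i ^ 2) =
        exp (-(1 / 2) * ∑ i, z i ^ 2) * exp (l * ∑ i, d i * z i ^ 2) := by
      rw [← Real.exp_add, Finset.mul_sum, Finset.mul_sum, ← Finset.sum_add_distrib]
      congr 1
      exact Finset.sum_congr rfl fun i _ => by ring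
    rw [this]; ring
  simp_rw [hint] at hcv
  rw [lintegral_const_mul' _ _ ENNReal.ofReal_ne_top,
    ENNReal.mul_right_inj (by simpa using hP) ENNReal.ofReal_ne_top] at hcv
  rw [← hcv, lintegral_fin_prod_eq_prod
    (fun i z => ENNReal.ofReal ((2 * π) ^ (-(1 : ℝ) / 2) * exp (-(1 / 2 - l * d i) * z ^ 2)))
    (fun i => by fun_prop)]
  refine (Finset.prod_le_prod' fun i _ => lintegral_gaussian_sq_le (hd i)).trans ?_
  rw [← ENNReal.ofReal_prod_of_nonneg (fun i _ => by positivity), ← Real.exp_sum,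
    Finset.mul_sum, Finset.mul_sum, ← Finset.sum_add_distrib]
  apply ENNReal.ofReal_le_ofReal
  apply le_of_eq
  congr 1
  exact Finset.sum_congr rfl fun i _ => by ring

/-- Eigenvalues of a product are bounded by the product of the maximal absolute row sums. -/
lemma abs_le_of_mul_eq_mul_diagonal {p : ℕ} {C A P : Matrix (Fin p) (Fin p) ℝ} {d : Fin p → ℝ}
    {K m : ℝ} (hK : ∀ i, ∑ j, |C i j| ≤ K) (hm : ∀ i, ∑ j, |A i j| ≤ m) (hP : P.det ≠ 0)
    (h : C * A * P = P * diagonal d) (i : Fin p) : |d i| ≤ K * m := by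
  obtain ⟨k, -, hk⟩ := Finset.exists_max_image Finset.univ (fun k => |P k i|) ⟨i, Finset.mem_univ i⟩
  have hm0 : 0 ≤ m := (Finset.sum_nonneg fun j _ => abs_nonneg _).trans (hm i)
  have hki : 0 < |P k i| := by
    by_contra hcon
    apply hP
    refine det_eq_zero_of_column_eq_zero i fun j => ?_
    have := hk j (Finset.mem_univ j)
    exact abs_eq_zero.mp (le_antisymm (this.trans (not_lt.mp hcon)) (abs_nonneg _))
  have hAP : ∀ j, |(A * P) j i| ≤ m * |P k i| := by
    intro j
    rw [mul_apply]
    calc |∑ x, A j x * P x i| ≤ ∑ x, |A j x| * |P x i| :=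
          (Finset.abs_sum_le_sum_abs _ _).trans_eq (by simp [abs_mul])
      _ ≤ ∑ x, |A j x| * |P k i| := Finset.sum_le_sum fun x _ =>
          mul_le_mul_of_nonneg_left (hk x (Finset.mem_univ x)) (abs_nonneg _)
      _ ≤ m * |P k i| := by
          rw [← Finset.sum_mul]; exact mul_le_mul_of_nonneg_right (hm j) hki.le
  have e : P k i * d i = ∑ j, C k j * (A * P) j i := by
    have := congrFun (congrFun h k) i
    rw [mul_diagonal, Matrix.mul_assoc, mul_apply] at this
    exact this.symm
  have : |P k i| * |d i| ≤ |P k i| * (K * m) := by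
    rw [← abs_mul, e]
    calc |∑ j, C k j * (A * P) j i| ≤ ∑ j, |C k j| * |(A * P) j i| :=
          (Finset.abs_sum_le_sum_abs _ _).trans_eq (by simp [abs_mul])
      _ ≤ ∑ j, |C k j| * (m * |P k i|) := Finset.sum_le_sum fun x _ =>
          mul_le_mul_of_nonneg_left (hAP x) (abs_nonneg _)
      _ ≤ K * (m * |P k i|) := by
          rw [← Finset.sum_mul]; exact mul_le_mul_of_nonneg_right (hK k) (by positivity)
      _ = |P k i| * (K * m) := by ring
  exact le_of_mul_le_mul_left this hki

/-- The Schur test for a symmetric matrix. -/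
lemma sum_sq_vecMul_le {p : ℕ} {C : Matrix (Fin p) (Fin p) ℝ} {K : ℝ} (hC : Cᵀ = C)
    (hK : ∀ i, ∑ j, |C i j| ≤ K) (a : Fin p → ℝ) :
    ∑ j, (∑ k, a k * C k j) ^ 2 ≤ K ^ 2 * ∑ k, a k ^ 2 := by
  have hsymm : ∀ i j, C i j = C j i := fun i j => congrFun (congrFun hC.symm i) j
  have h1 : ∀ j, (∑ k, a k * C k j) ^ 2 ≤ K * ∑ k, |C k j| * a k ^ 2 := by
    intro j
    calc (∑ k, a k * C k j) ^ 2 ≤ (∑ k, |C k j|) * ∑ k, |C k j| * a k ^ 2 := by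
          refine Finset.sum_sq_le_sum_mul_sum_of_sq_le_mul _ (fun _ _ => abs_nonneg _)
            (fun _ _ => by positivity) fun k _ => ?_
          rw [mul_pow, ← sq_abs (C k j)]; exact le_of_eq (by ring)
      _ ≤ K * ∑ k, |C k j| * a k ^ 2 := by
          refine mul_le_mul_of_nonneg_right ?_ (Finset.sum_nonneg fun _ _ => by positivity)
          simpa only [hsymm _ j] using hK j
  have hK0 : ∀ _ : Fin p, 0 ≤ K := fun i =>
    (Finset.sum_nonneg fun j _ => abs_nonneg _).trans (hK i)
  calc ∑ j, (∑ k, a k * C k j) ^ 2 ≤ ∑ j, K * ∑ k, |C k j| * a k ^ 2 :=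
        Finset.sum_le_sum fun j _ => h1 j
    _ = ∑ k, K * ((∑ j, |C k j|) * a k ^ 2) := by
        rw [← Finset.mul_sum, Finset.sum_comm, Finset.mul_sum]; simp_rw [Finset.sum_mul]
    _ ≤ ∑ k, K * (K * a k ^ 2) := Finset.sum_le_sum fun k _ =>
        mul_le_mul_of_nonneg_left (mul_le_mul_of_nonneg_right (hK k) (sq_nonneg _)) (hK0 k)
    _ = K ^ 2 * ∑ k, a k ^ 2 := by
        rw [Finset.mul_sum]; exact Finset.sum_congr rfl fun _ _ => by ring

lemma trace_mul_self_le_sum_sq {p : ℕ} (B : Matrix (Fin p) (Fin p) ℝ) :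
    trace (B * B) ≤ ∑ i, ∑ j, B i j ^ 2 := by
  have h : ∑ i, ∑ j, B i j * B j i ≤ ∑ i, ∑ j, (B i j ^ 2 + B j i ^ 2) / 2 :=
    Finset.sum_le_sum fun i _ => Finset.sum_le_sum fun j _ => by
      nlinarith [sq_nonneg (B i j - B j i)]
  have h2 : ∑ i, ∑ j, (B i j ^ 2 + B j i ^ 2) / 2 = ∑ i, ∑ j, B i j ^ 2 := by
    simp_rw [← Finset.sum_div, Finset.sum_add_distrib]
    rw [Finset.sum_comm (f := fun i j => B j i ^ 2)]
    ring
  simpa [trace, mul_apply] using h.trans_eq h2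

/-- Sub-gamma moment generating function bound for a centered Gaussian quadratic form. -/
lemma lintegral_gaussianPDF_mul_exp_centered_le {p : ℕ} {C A : Matrix (Fin p) (Fin p) ℝ}
    {K m V l : ℝ} (hC : C.PosDef) (hA : Aᵀ = A) (hK : ∀ i, ∑ j, |C i j| ≤ K)
    (hm : ∀ i, ∑ j, |A i j| ≤ m) (hV : ∑ i, ∑ j, A i j ^ 2 ≤ V) (hl0 : 0 ≤ l)
    (hl : l * (K * m) ≤ 1 / 4) :
    ∫⁻ x, gaussianPDF C x * ENNReal.ofReal (exp (l * (x ⬝ᵥ A *ᵥ x - trace (A * C))))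
      ≤ ENNReal.ofReal (exp (2 * l ^ 2 * (K ^ 2 * V))) := by
  obtain ⟨P, d, hPC, hPA⟩ := hC.exists_congruence_diagonal hA
  have hCt : Cᵀ = C := by rw [← hPC, transpose_mul, transpose_transpose]
  have hP : P.det ≠ 0 := by
    intro h
    have := hC.det_pos
    rw [← hPC, det_mul, h] at this
    simp at this
  have hd : ∀ i, |l * d i| ≤ 1 / 4 := fun i => by
    rw [abs_mul, abs_of_nonneg hl0]
    refine (mul_le_mul_of_nonneg_left (abs_le_of_mul_eq_mul_diagonal hK hm hP ?_ i) hl0).trans hl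
    rw [← hPA, ← hPC]; simp only [Matrix.mul_assoc]
  have htr : ∑ i, d i = trace (A * C) := by
    rw [← trace_diagonal, ← hPA, ← hPC, Matrix.mul_assoc, trace_mul_comm, Matrix.mul_assoc]
  have htr2 : ∑ i, d i ^ 2 ≤ K ^ 2 * V := by
    have e : ∑ i, d i ^ 2 = trace (A * C * (A * C)) := by
      have : ∑ i, d i ^ 2 = trace (diagonal d * diagonal d) := by
        simp [diagonal_mul_diagonal, trace_diagonal, sq]
      rw [this, ← hPA, ← hPC]
      simp only [Matrix.mul_assoc]
      rw [trace_mul_comm]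
      simp only [Matrix.mul_assoc]
    rw [e]
    refine (trace_mul_self_le_sum_sq _).trans ?_
    calc ∑ i, ∑ j, (A * C) i j ^ 2 ≤ ∑ i, K ^ 2 * ∑ k, A i k ^ 2 :=
          Finset.sum_le_sum fun i _ => by
            simp_rw [mul_apply]; exact sum_sq_vecMul_le hCt hK (A i)
      _ ≤ K ^ 2 * V := by
          rw [← Finset.mul_sum]; exact mul_le_mul_of_nonneg_left hV (sq_nonneg _)
  have key := lintegral_gaussianPDF_mul_exp_le hC hPC hPA hd
  have hsplit : ∀ x : Fin p → ℝ,
      gaussianPDF C x * ENNReal.ofReal (exp (l * (x ⬝ᵥ A *ᵥ x - trace (A * C)))) =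
      gaussianPDF C x * ENNReal.ofReal (exp (l * (x ⬝ᵥ A *ᵥ x))) *
        ENNReal.ofReal (exp (-(l * trace (A * C)))) := fun x => by
    rw [mul_assoc, ← ENNReal.ofReal_mul (exp_pos _).le, ← Real.exp_add]
    congr 4; ring
  simp_rw [hsplit]
  rw [lintegral_mul_const' _ _ ENNReal.ofReal_ne_top]
  refine (mul_le_mul_left key _).trans ?_
  rw [← ENNReal.ofReal_mul (exp_pos _).le, ← Real.exp_add, htr]
  apply ENNReal.ofReal_le_ofReal
  apply Real.exp_le_exp.mpr
  nlinarith [mul_le_mul_of_nonneg_left htr2 (sq_nonneg l)]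

/-- Chernoff bound for the sum of independent centered Gaussian quadratic forms. -/
lemma iidGaussian_quadForm_tail {n p : ℕ} (hn : 0 < n) {C A : Matrix (Fin p) (Fin p) ℝ}
    {K m x : ℝ} (hC : C.PosDef) (hA : Aᵀ = A) (hK0 : 0 < K) (hm0 : 0 < m) (hx : 0 ≤ x)
    (hK : ∀ i, ∑ j, |C i j| ≤ K) (hm : ∀ i, ∑ j, |A i j| ≤ m)
    (hV : ∑ i, ∑ j, A i j ^ 2 ≤ m / 2) :
    iidGaussian n p C {X | n * (K * max √(4 * (m * x / n)) (8 * (m * x / n))) ≤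
      ∑ k, (X k ⬝ᵥ A *ᵥ X k - trace (A * C))} ≤ ENNReal.ofReal (exp (-x)) := by
  have hn' : (0 : ℝ) < n := by exact_mod_cast hn
  set a := m * x / n with ha
  have ha0 : 0 ≤ a := by positivity
  set τ := max √(4 * a) (8 * a) with hτ
  obtain ⟨μ, hμ0, hμ, hμa⟩ : ∃ μ : ℝ, 0 ≤ μ ∧ μ ≤ 1 / 4 ∧ a ≤ μ * τ - μ ^ 2 := by
    have h4 : √(4 * a) = 2 * √a := by
      rw [Real.sqrt_mul (by norm_num), show (4 : ℝ) = 2 ^ 2 by norm_num,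
        Real.sqrt_sq (by norm_num)]
    rcases le_total a (1 / 16) with h | h
    · refine ⟨√a, Real.sqrt_nonneg _, ?_, ?_⟩
      · rw [Real.sqrt_le_left (by norm_num)]; linarith
      · have h5 : 2 * √a ≤ τ := h4 ▸ le_max_left _ _
        nlinarith [Real.sq_sqrt ha0, mul_le_mul_of_nonneg_left h5 (Real.sqrt_nonneg a)]
    · refine ⟨1 / 4, by norm_num, le_rfl, ?_⟩
      have h5 : 8 * a ≤ τ := le_max_right _ _
      linarith
  set l := μ / (K * m) with hl
  have hlm : l * (K * m) = μ := by rw [hl]; field_simp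
  have hl0 : 0 ≤ l := by positivity
  have hmgf := lintegral_gaussianPDF_mul_exp_centered_le hC hA hK hm hV hl0 (hlm.trans_le hμ)
  have hg : Measurable (gaussianPDF C) := by
    unfold gaussianPDF
    simp only [dotProduct, mulVec]
    fun_prop
  have hgX : Measurable fun X : Fin n → Fin p → ℝ => ∏ k, gaussianPDF C (X k) :=
    Finset.measurable_prod _ fun k _ => hg.comp (measurable_pi_apply k)
  have hq : Measurable fun y : Fin p → ℝ =>
      ENNReal.ofReal (exp (l * (y ⬝ᵥ A *ᵥ y - trace (A * C)))) := by
    simp only [dotProduct, mulVec]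
    fun_prop
  set F : (Fin n → Fin p → ℝ) → ℝ≥0∞ := fun X =>
    ∏ k, ENNReal.ofReal (exp (l * (X k ⬝ᵥ A *ᵥ X k - trace (A * C)))) with hF
  have hFm : Measurable F := Finset.measurable_prod _ fun k _ => hq.comp (measurable_pi_apply k)
  have hFint : ∫⁻ X, F X ∂(iidGaussian n p C) ≤
      ENNReal.ofReal (exp (n * (2 * l ^ 2 * (K ^ 2 * (m / 2))))) := by
    rw [iidGaussian, lintegral_withDensity_eq_lintegral_mul _ hgX hFm]
    simp only [Pi.mul_apply, hF, ← Finset.prod_mul_distrib]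
    rw [lintegral_fin_prod_eq_prod (fun _ y => gaussianPDF C y *
      ENNReal.ofReal (exp (l * (y ⬝ᵥ A *ᵥ y - trace (A * C))))) (fun _ => hg.mul hq)]
    refine (Finset.prod_le_prod' fun i _ => hmgf).trans ?_
    rw [Finset.prod_const, Finset.card_univ, Fintype.card_fin,
      ← ENNReal.ofReal_pow (exp_pos _).le, ← Real.exp_nat_mul]
  have hmarkov := mul_meas_ge_le_lintegral (μ := iidGaussian n p C) hFm
    (ENNReal.ofReal (exp (l * (n * (K * τ)))))
  have hsub : {X : Fin n → Fin p → ℝ | n * (K * τ) ≤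
      ∑ k, (X k ⬝ᵥ A *ᵥ X k - trace (A * C))} ⊆
      {X | ENNReal.ofReal (exp (l * (n * (K * τ)))) ≤ F X} := by
    intro X hX
    simp only [Set.mem_ofPred_eq, hF] at hX ⊢
    rw [← ENNReal.ofReal_prod_of_nonneg (fun i _ => (exp_pos _).le), ← Real.exp_sum,
      ← Finset.mul_sum]
    exact ENNReal.ofReal_le_ofReal (Real.exp_le_exp.mpr (mul_le_mul_of_nonneg_left hX hl0))
  refine (measure_mono hsub).trans ?_
  have hexp : exp (n * (2 * l ^ 2 * (K ^ 2 * (m / 2)))) ≤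
      exp (l * (n * (K * τ))) * exp (-x) := by
    rw [← Real.exp_add, Real.exp_le_exp]
    have e1 : n * (2 * l ^ 2 * (K ^ 2 * (m / 2))) = n / m * μ ^ 2 := by
      rw [← hlm]; field_simp
    have e2 : l * (n * (K * τ)) = n / m * (μ * τ) := by
      rw [← hlm]; field_simp
    have e3 : x = n / m * a := by rw [ha]; field_simp
    have : n / m * a ≤ n / m * (μ * τ - μ ^ 2) := mul_le_mul_of_nonneg_left hμa (by positivity)
    rw [e1, e2, e3]; linarith
  have h := hmarkov.trans (hFint.trans (ENNReal.ofReal_le_ofReal hexp))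
  rw [ENNReal.ofReal_mul (exp_pos _).le] at h
  exact (ENNReal.mul_le_mul_iff_right (by simp [exp_pos]) ENNReal.ofReal_ne_top).mp h

lemma card_filter_lag_le_two {p : ℕ} (k : Fin p) (j : ℕ) :
    (Finset.univ.filter fun l : Fin p => ((k : ℤ) - (l : ℤ)).natAbs = j).card ≤ 2 := by
  rw [← Finset.card_map Fin.valEmbedding]
  refine (Finset.card_le_card (t := {(k : ℕ) - j, (k : ℕ) + j}) ?_).trans Finset.card_le_two
  intro x hx
  simp only [Finset.mem_map, Finset.mem_filter, Finset.mem_univ, true_and,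
    Fin.valEmbedding_apply] at hx
  obtain ⟨l, hl, rfl⟩ := hx
  simp only [Finset.mem_insert, Finset.mem_singleton]
  omega

lemma sum_sum_ite_eq_add {p j : ℕ} (hjp : j < p) :
    ∑ k : Fin p, ∑ l : Fin p, (if (l : ℕ) = k + j then (1 : ℝ) else 0) = (p : ℝ) - j := by
  have h1 : ∀ k : Fin p, ∑ l : Fin p, (if (l : ℕ) = k + j then (1 : ℝ) else 0) =
      if (k : ℕ) + j < p then 1 else 0 := by
    intro k
    rw [Fin.sum_univ_eq_sum_range (fun l => if l = k + j then (1 : ℝ) else 0),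
      Finset.sum_ite_eq']
    simp
  simp_rw [h1]
  rw [Fin.sum_univ_eq_sum_range (fun k => if k + j < p then (1 : ℝ) else 0), Finset.sum_boole]
  have : (Finset.range p).filter (fun k => k + j < p) = Finset.range (p - j) := by
    ext k; simp only [Finset.mem_filter, Finset.mem_range]; omega
  rw [this, Finset.card_range, Nat.cast_sub hjp.le]

/-- The number of entries on the two `j`-th off-diagonals. -/
lemma sum_sum_ite_lag {p j : ℕ} (hj : 1 ≤ j) (hjp : j < p) :
    ∑ k : Fin p, ∑ l : Fin p, (if ((k : ℤ) - (l : ℤ)).natAbs = j then (1 : ℝ) else 0)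
      = 2 * ((p : ℝ) - j) := by
  have h : ∀ k l : Fin p, (if ((k : ℤ) - (l : ℤ)).natAbs = j then (1 : ℝ) else 0) =
      (if (l : ℕ) = k + j then (1 : ℝ) else 0) + (if (k : ℕ) = l + j then (1 : ℝ) else 0) := by
    intro k l
    by_cases h1 : (l : ℕ) = k + j
    · rw [if_pos h1, if_pos (by omega), if_neg (by omega), add_zero]
    · by_cases h2 : (k : ℕ) = l + j
      · rw [if_neg h1, if_pos (by omega), if_pos h2, zero_add]
      · rw [if_neg h1, if_neg (by omega), if_neg h2, zero_add]
  simp_rw [h, Finset.sum_add_distrib]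
  rw [sum_sum_ite_eq_add hjp, Finset.sum_comm, sum_sum_ite_eq_add hjp]
  ring

/-- `Tr (A_j C)` is the `j`-th autocovariance of a Toeplitz matrix `C`. -/
lemma trace_lagMatrix_mul {p j : ℕ} (hj : 1 ≤ j) (hjp : j < p) {C : Matrix (Fin p) (Fin p) ℝ}
    {v : ℕ → ℝ} (hC : ∀ i j : Fin p, C i j = v ((i : ℤ) - (j : ℤ)).natAbs) :
    trace (lagMatrix p j * C) = v j := by
  have h : ∀ k l : Fin p, lagMatrix p j k l * C l k =
      v j / (2 * ((p : ℝ) - j)) *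
        (if ((k : ℤ) - (l : ℤ)).natAbs = j then (1 : ℝ) else 0) := by
    intro k l
    rw [lagMatrix, of_apply, hC, show ((l : ℤ) - (k : ℤ)).natAbs = ((k : ℤ) - (l : ℤ)).natAbs by omega]
    split_ifs with h
    · rw [h]; ring
    · ring
  have hpj : (0 : ℝ) < (p : ℝ) - j := sub_pos.mpr (by exact_mod_cast hjp)
  simp only [trace, diag_apply, mul_apply, h, ← Finset.mul_sum]
  rw [sum_sum_ite_lag hj hjp]
  field_simp

lemma trace_sum_lagMatrix_mul {p S : ℕ} (hSp : S < p) {T : Finset ℕ} (hT : T ⊆ Finset.Icc 1 S)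
    {C : Matrix (Fin p) (Fin p) ℝ} {v : ℕ → ℝ}
    (hC : ∀ i j : Fin p, C i j = v ((i : ℤ) - (j : ℤ)).natAbs) :
    trace ((∑ j ∈ T, lagMatrix p j) * C) = ∑ j ∈ T, v j := by
  rw [Finset.sum_mul, trace_sum]
  refine Finset.sum_congr rfl fun j hj => ?_
  have := Finset.mem_Icc.mp (hT hj)
  exact trace_lagMatrix_mul this.1 (by omega) hC

lemma trace_sum_lagMatrix {p S : ℕ} (hSp : S < p) {T : Finset ℕ} (hT : T ⊆ Finset.Icc 1 S) :
    trace (∑ j ∈ T, lagMatrix p j) = 0 := by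
  have h := trace_sum_lagMatrix_mul hSp hT (C := 1) (v := fun j => if j = 0 then 1 else 0) (by
    intro i j
    rw [one_apply]
    congr 1
    simp only [Fin.ext_iff, eq_iff_iff]
    omega)
  rw [Matrix.mul_one] at h
  rw [h]
  refine Finset.sum_eq_zero fun j hj => if_neg ?_
  have := Finset.mem_Icc.mp (hT hj)
  omega

lemma transpose_sum_lagMatrix (p : ℕ) (T : Finset ℕ) :
    (∑ j ∈ T, lagMatrix p j)ᵀ = ∑ j ∈ T, lagMatrix p j := by
  rw [transpose_sum]
  refine Finset.sum_congr rfl fun j _ => ?_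
  ext k l
  simp only [transpose_apply, lagMatrix, of_apply]
  rw [show ((l : ℤ) - (k : ℤ)).natAbs = ((k : ℤ) - (l : ℤ)).natAbs by omega]

lemma sum_lagMatrix_apply (p : ℕ) (T : Finset ℕ) (k l : Fin p) :
    (∑ j ∈ T, lagMatrix p j) k l = if ((k : ℤ) - (l : ℤ)).natAbs ∈ T then
      1 / (2 * ((p : ℝ) - (((k : ℤ) - (l : ℤ)).natAbs : ℕ))) else 0 := by
  rw [Matrix.sum_apply]
  simp only [lagMatrix, of_apply]
  rw [Finset.sum_ite_eq]

lemma sum_lagMatrix_apply_mem_Icc {p S : ℕ} (hSp : S < p) {T : Finset ℕ}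
    (hT : T ⊆ Finset.Icc 1 S) (k l : Fin p) :
    (∑ j ∈ T, lagMatrix p j) k l ∈ Set.Icc 0 (1 / (2 * ((p : ℝ) - S))) := by
  have hpS : (0 : ℝ) < (p : ℝ) - S := sub_pos.mpr (by exact_mod_cast hSp)
  rw [sum_lagMatrix_apply]
  split_ifs with h
  · have h1 : ((((k : ℤ) - (l : ℤ)).natAbs : ℕ) : ℝ) ≤ S := by
      exact_mod_cast (Finset.mem_Icc.mp (hT h)).2
    have h2 : 0 < (p : ℝ) - (((k : ℤ) - (l : ℤ)).natAbs : ℕ) := by linarith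
    exact ⟨by positivity, one_div_le_one_div_of_le (by positivity) (by linarith)⟩
  · exact ⟨le_rfl, by positivity⟩

/-- The number of entries in a row lying on off-diagonals indexed by `T`. -/
lemma sum_ite_lag_mem_le {p : ℕ} (T : Finset ℕ) (k : Fin p) :
    ∑ l : Fin p, (if ((k : ℤ) - (l : ℤ)).natAbs ∈ T then (1 : ℝ) else 0) ≤ 2 * T.card := by
  have h : ∀ l : Fin p, (if ((k : ℤ) - (l : ℤ)).natAbs ∈ T then (1 : ℝ) else 0) =
      ∑ j ∈ T, if ((k : ℤ) - (l : ℤ)).natAbs = j then (1 : ℝ) else 0 := fun l => by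
    rw [Finset.sum_ite_eq]
  simp_rw [h]
  rw [Finset.sum_comm]
  refine (Finset.sum_le_card_nsmul T _ 2 fun j _ => ?_).trans_eq (by rw [nsmul_eq_mul, mul_comm])
  rw [Finset.sum_boole]
  exact_mod_cast card_filter_lag_le_two k j

lemma sum_abs_sum_lagMatrix_le {p S : ℕ} (hSp : S < p) {T : Finset ℕ}
    (hT : T ⊆ Finset.Icc 1 S) (k : Fin p) :
    ∑ l, |(∑ j ∈ T, lagMatrix p j) k l| ≤ T.card / ((p : ℝ) - S) := by
  have hpS : (0 : ℝ) < (p : ℝ) - S := sub_pos.mpr (by exact_mod_cast hSp)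
  calc ∑ l, |(∑ j ∈ T, lagMatrix p j) k l|
      ≤ ∑ l : Fin p, 1 / (2 * ((p : ℝ) - S)) *
          (if ((k : ℤ) - (l : ℤ)).natAbs ∈ T then (1 : ℝ) else 0) := by
        refine Finset.sum_le_sum fun l _ => ?_
        have h := sum_lagMatrix_apply_mem_Icc hSp hT k l
        rw [abs_of_nonneg h.1]
        split_ifs with h1
        · simpa using h.2
        · rw [sum_lagMatrix_apply, if_neg h1, mul_zero]
    _ ≤ 1 / (2 * ((p : ℝ) - S)) * (2 * T.card) := by
        rw [← Finset.mul_sum]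
        exact mul_le_mul_of_nonneg_left (sum_ite_lag_mem_le T k) (by positivity)
    _ = T.card / ((p : ℝ) - S) := by field_simp

lemma sum_sum_sq_sum_lagMatrix_le {p S : ℕ} (hSp : S < p) {T : Finset ℕ}
    (hT : T ⊆ Finset.Icc 1 S) :
    ∑ k, ∑ l, (∑ j ∈ T, lagMatrix p j) k l ^ 2 ≤ T.card / ((p : ℝ) - S) / 2 := by
  have hpS : (0 : ℝ) < (p : ℝ) - S := sub_pos.mpr (by exact_mod_cast hSp)
  have htot : ∑ k, ∑ l, (∑ j ∈ T, lagMatrix p j) k l = T.card := by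
    have h := trace_sum_lagMatrix_mul hSp hT (C := of fun _ _ => 1) (v := fun _ => 1)
      (fun _ _ => rfl)
    simpa [trace, mul_apply] using h
  calc ∑ k, ∑ l, (∑ j ∈ T, lagMatrix p j) k l ^ 2
      ≤ ∑ k, ∑ l, 1 / (2 * ((p : ℝ) - S)) * (∑ j ∈ T, lagMatrix p j) k l := by
        refine Finset.sum_le_sum fun k _ => Finset.sum_le_sum fun l _ => ?_
        have h := sum_lagMatrix_apply_mem_Icc hSp hT k l
        rw [sq]
        exact mul_le_mul_of_nonneg_right h.2 h.1
    _ = T.card / ((p : ℝ) - S) / 2 := by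
        simp_rw [← Finset.mul_sum]
        rw [htot]; field_simp

lemma trace_mul_sampleCov_sub_one {n p : ℕ} {A : Matrix (Fin p) (Fin p) ℝ} (hA : trace A = 0)
    (X : Fin n → Fin p → ℝ) :
    trace (A * (sampleCov X - 1)) = (n : ℝ)⁻¹ * ∑ k, X k ⬝ᵥ A *ᵥ X k := by
  rw [Matrix.mul_sub, Matrix.mul_one, trace_sub, hA, sub_zero, sampleCov, Matrix.mul_smul,
    trace_smul, smul_eq_mul, Matrix.mul_sum, trace_sum]
  congr 1
  refine Finset.sum_congr rfl fun k _ => ?_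
  simp only [trace, diag_apply, mul_apply, of_apply, dotProduct, mulVec, Finset.mul_sum]
  exact Finset.sum_congr rfl fun i _ => Finset.sum_congr rfl fun j _ => by ring

/-- Entries of a positive definite matrix with unit diagonal are at most one in absolute value. -/
lemma Matrix.PosDef.abs_apply_le_one {p : ℕ} {C : Matrix (Fin p) (Fin p) ℝ} (hC : C.PosDef)
    (hdiag : ∀ i, C i i = 1) (i j : Fin p) : |C i j| ≤ 1 := by
  have hsymm : C j i = C i j := by simpa using hC.1.apply i j
  have key : ∀ c : ℝ, 0 ≤ 1 + 2 * c * C i j + c ^ 2 := by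
    intro c
    have h := hC.posSemidef.dotProduct_mulVec_nonneg (Pi.single i 1 + c • Pi.single j 1)
    simp [mulVec_add, mulVec_smul, add_dotProduct, dotProduct_add, hdiag, hsymm] at h
    linarith
  have h1 := key 1
  have h2 := key (-1)
  rw [abs_le]
  constructor <;> linarith

/-- Absolute row sums of a Toeplitz correlation matrix with autocovariance supported on `T`. -/
lemma sum_abs_toeplitz_le {p s : ℕ} {v : ℕ → ℝ}
    {C : Matrix (Fin p) (Fin p) ℝ} (hC : C.PosDef) (hv0 : v 0 = 1)
    (hCv : ∀ i j : Fin p, C i j = v ((i : ℤ) - (j : ℤ)).natAbs) {T : Finset ℕ}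
    (hT : T.card = s) (hv : ∀ j, 1 ≤ j → j ≤ p - 1 → j ∉ T → v j = 0) (k : Fin p) :
    ∑ l, |C k l| ≤ 2 * s + 1 := by
  have h1 := hC.abs_apply_le_one (fun i => by rw [hCv]; simpa using hv0)
  calc ∑ l, |C k l| ≤ ∑ l : Fin p, ((if ((k : ℤ) - (l : ℤ)).natAbs ∈ T then (1 : ℝ) else 0) +
        if k = l then 1 else 0) := by
        refine Finset.sum_le_sum fun l _ => ?_
        by_cases hkl : k = l
        · rw [if_pos hkl]
          refine (h1 k l).trans (le_add_of_nonneg_left ?_)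
          split_ifs <;> norm_num
        · rw [if_neg hkl, add_zero]
          split_ifs with hmem
          · exact h1 k l
          · rw [hCv, hv _ (by rw [Fin.ext_iff] at hkl; omega) (by omega) hmem, abs_zero]
    _ ≤ 2 * s + 1 := by
        rw [Finset.sum_add_distrib, Finset.sum_ite_eq, if_pos (Finset.mem_univ _), ← hT]
        gcongr
        exact sum_ite_lag_mem_le T k

/-- Type I error of a single quadratic-form test. -/
lemma iidGaussian_one_trace_ge_le {n p S : ℕ} (hn : 0 < n) (hSp : S < p) {T : Finset ℕ}
    (hT : T ⊆ Finset.Icc 1 S) {m x : ℝ} (hm0 : 0 < m) (hm : T.card / ((p : ℝ) - S) = m)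
    (hx : 0 ≤ x) :
    iidGaussian n p 1 {X | trace ((∑ j ∈ T, lagMatrix p j) * (sampleCov X - 1)) ≥
      max √(4 * (m * x / n)) (8 * (m * x / n))} ≤ ENNReal.ofReal (exp (-x)) := by
  have hn' : (0 : ℝ) < n := by exact_mod_cast hn
  have htail := iidGaussian_quadForm_tail hn (C := 1) (K := 1) Matrix.PosDef.one
    (transpose_sum_lagMatrix p T) one_pos hm0 hx (fun i => by simp [one_apply, apply_ite abs])
    (fun k => hm ▸ sum_abs_sum_lagMatrix_le hSp hT k) (hm ▸ sum_sum_sq_sum_lagMatrix_le hSp hT)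
  refine (measure_mono fun X hX => ?_).trans htail
  simp only [Set.mem_ofPred_eq, trace_mul_sampleCov_sub_one (trace_sum_lagMatrix hSp hT),
    Matrix.mul_one, trace_sum_lagMatrix hSp hT, sub_zero, one_mul, ge_iff_le] at hX ⊢
  rwa [inv_mul_eq_div, le_div_iff₀ hn', mul_comm] at hX

/-- Type II error of the quadratic-form test tuned to the support of the alternative. -/
lemma iidGaussian_trace_lt_le {n p s S : ℕ} (hn : 0 < n) (hSp : S < p)
    {v : ℕ → ℝ} {C : Matrix (Fin p) (Fin p) ℝ} (hC : C.PosDef) (hv0 : v 0 = 1)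
    (hCv : ∀ i j : Fin p, C i j = v ((i : ℤ) - (j : ℤ)).natAbs) {T : Finset ℕ}
    (hT : T ⊆ Finset.Icc 1 S) (hTs : T.card = s)
    (hv : ∀ j, 1 ≤ j → j ≤ p - 1 → j ∉ T → v j = 0) {m x t : ℝ} (hm0 : 0 < m)
    (hm : T.card / ((p : ℝ) - S) = m) (hx : 0 ≤ x)
    (ht : t + (2 * s + 1) * max √(4 * (m * x / n)) (8 * (m * x / n)) ≤ ∑ j ∈ T, v j) :
    iidGaussian n p C {X | trace ((∑ j ∈ T, lagMatrix p j) * (sampleCov X - 1)) < t}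
      ≤ ENNReal.ofReal (exp (-x)) := by
  have hn' : (0 : ℝ) < n := by exact_mod_cast hn
  have htail := iidGaussian_quadForm_tail hn (A := -∑ j ∈ T, lagMatrix p j) (K := 2 * s + 1) hC
    (by rw [transpose_neg, transpose_sum_lagMatrix]) (by positivity) hm0 hx
    (sum_abs_toeplitz_le hC hv0 hCv hTs hv)
    (fun k => by simpa only [Matrix.neg_apply, abs_neg, hm] using sum_abs_sum_lagMatrix_le hSp hT k)
    (by simpa only [Matrix.neg_apply, neg_sq, hm] using sum_sum_sq_sum_lagMatrix_le hSp hT)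
  refine (measure_mono fun X hX => ?_).trans htail
  simp only [Set.mem_ofPred_eq, trace_mul_sampleCov_sub_one (trace_sum_lagMatrix hSp hT),
    Matrix.neg_mul, trace_neg, trace_sum_lagMatrix_mul hSp hT hCv, neg_mulVec, dotProduct_neg,
    Finset.sum_sub_distrib, Finset.sum_neg_distrib, Finset.sum_const, Finset.card_univ,
    Fintype.card_fin, nsmul_eq_mul] at hX ⊢
  rw [inv_mul_eq_div, div_lt_iff₀ hn'] at hX
  nlinarith [mul_le_mul_of_nonneg_left ht hn'.le]

/-- Risk bound for the one-sided highly-sparse (scan) test `Δ^{HS+}`. -/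
theorem test_HS_plus_risk {p n s S : ℕ} (hn : 0 < n) (hs : 1 ≤ s) (hsS : s < S)
    (hS : (S : ℝ) < (p:ℝ)/2) (u σ t : ℝ) (hu : 1 < u)
    (ht : t = max (Real.sqrt (4 * u * s * Real.log (S.choose s) / (n * ((p:ℝ) - S))))
        (8 * u * s * Real.log (S.choose s) / (n * ((p:ℝ) - S))))
    (hσ : σ ≥ (1 / (s:ℝ)) * (t + (2 * s + 1) *
        max (Real.sqrt (u * s / (n * ((p:ℝ) - S)))) (2 * u * s / (n * ((p:ℝ) - S))))) :
    (iidGaussian n p 1) {X | ∃ T : Finset ℕ, T ⊆ Finset.Icc 1 S ∧ T.card = s ∧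
        Matrix.trace ((∑ j ∈ T, lagMatrix p j) * (sampleCov X - 1)) ≥ t}
    + ⨆ (Cov : Matrix (Fin p) (Fin p) ℝ) (_ : memFplus p s S σ 1 Cov),
        (iidGaussian n p Cov) {X | ∀ T : Finset ℕ, T ⊆ Finset.Icc 1 S → T.card = s →
          Matrix.trace ((∑ j ∈ T, lagMatrix p j) * (sampleCov X - 1)) < t}
    ≤ ENNReal.ofReal (Real.exp (-(u - 1) * Real.log (S.choose s)) + Real.exp (-u/4)) := by
  have hp2 : (S : ℝ) < p := by
    have : (0 : ℝ) ≤ p := Nat.cast_nonneg p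
    linarith
  have hSp : S < p := by exact_mod_cast hp2
  have hpS : (0 : ℝ) < (p : ℝ) - S := sub_pos.mpr hp2
  have hn' : (0 : ℝ) < n := by exact_mod_cast hn
  have hs' : (0 : ℝ) < s := by exact_mod_cast hs
  have hchoose : 1 ≤ S.choose s := Nat.choose_pos hsS.le
  set L := Real.log (S.choose s) with hL
  have hL0 : 0 ≤ L := Real.log_nonneg (by exact_mod_cast hchoose)
  set m : ℝ := s / ((p : ℝ) - S) with hm
  have hm0 : 0 < m := by positivity
  rw [ENNReal.ofReal_add (exp_pos _).le (exp_pos _).le]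
  refine add_le_add ?_ (iSup₂_le fun C hC => ?_)
  · have ht' : t = max √(4 * (m * (u * L) / n)) (8 * (m * (u * L) / n)) := by
      rw [ht, hm]
      congr 2 <;> field_simp
    have hsub : {X : Fin n → Fin p → ℝ | ∃ T : Finset ℕ, T ⊆ Finset.Icc 1 S ∧ T.card = s ∧
        trace ((∑ j ∈ T, lagMatrix p j) * (sampleCov X - 1)) ≥ t} ⊆
        ⋃ T ∈ (Finset.Icc 1 S).powersetCard s,
          {X | trace ((∑ j ∈ T, lagMatrix p j) * (sampleCov X - 1)) ≥ t} := by
      rintro X ⟨T, hT, hTs, hX⟩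
      exact Set.mem_biUnion (Finset.mem_powersetCard.mpr ⟨hT, hTs⟩) hX
    refine (measure_mono hsub).trans ((measure_biUnion_finset_le _ _).trans ?_)
    refine (Finset.sum_le_card_nsmul _ _ (ENNReal.ofReal (exp (-(u * L)))) fun T hT => ?_).trans ?_
    · obtain ⟨hT, hTs⟩ := Finset.mem_powersetCard.mp hT
      rw [ht']
      exact iidGaussian_one_trace_ge_le hn hSp hT hm0 (by rw [hTs]) (by positivity)
    · rw [Finset.card_powersetCard, Nat.card_Icc, Nat.add_sub_cancel, nsmul_eq_mul,
        ← ENNReal.ofReal_natCast, ← ENNReal.ofReal_mul (Nat.cast_nonneg _)]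
      apply ENNReal.ofReal_le_ofReal
      rw [← Real.exp_log (x := ((S.choose s : ℕ) : ℝ)) (by exact_mod_cast hchoose), ← hL,
        ← Real.exp_add]
      exact le_of_eq (by congr 1; ring)
  · obtain ⟨hCpos, v, hv0, hCv, T, hT, hTs, hvT, hv⟩ := hC
    have hmx : max √(4 * (m * (u / 4) / n)) (8 * (m * (u / 4) / n)) =
        max √(u * s / (n * ((p : ℝ) - S))) (2 * u * s / (n * ((p : ℝ) - S))) := by
      rw [hm]
      congr 1
      · congr 1; field_simp
      · field_simp; ring
    have hsub : {X : Fin n → Fin p → ℝ | ∀ T : Finset ℕ, T ⊆ Finset.Icc 1 S → T.card = s →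
        trace ((∑ j ∈ T, lagMatrix p j) * (sampleCov X - 1)) < t} ⊆
        {X | trace ((∑ j ∈ T, lagMatrix p j) * (sampleCov X - 1)) < t} :=
      fun X hX => hX T hT hTs
    refine (measure_mono hsub).trans ((iidGaussian_trace_lt_le hn hSp hCpos hv0
      hCv hT hTs hv hm0 (by rw [hTs]) (x := u / 4) (by linarith) ?_).trans_eq (by rw [neg_div]))
    rw [hmx]
    calc _ ≤ s * σ := by
          rw [ge_iff_le, one_div, inv_mul_le_iff₀ hs'] at hσ
          exact hσ
      _ = ∑ j ∈ T, σ := by rw [Finset.sum_const, hTs, nsmul_eq_mul]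
      _ ≤ ∑ j ∈ T, v j := Finset.sum_le_sum hvT
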